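/- Let G be an unrooted graph with edge set E and let G_k be its k-stretch. Then the number of subtrees of G_k equals Σ_{i,j ≥ 0} t_{i,j}(G) · k^i · C(k+1, 2)^j + k(k−1)|E|/2, where t_{i,j}(G) is the number of subtrees T of G with exactly i external edges having precisely one endvertex in T and j external edges having both endvertices in T. -/

import Mathlib

open scoped Classical

/-- `(S, B)` is a subtree of the graph `G`: `S` is a nonempty vertex set, `B` is a set of
edges of `G` with both endvertices in `S`, and the subgraph `(S, B)` is a tree
(connected with `|B| + 1 = |S|`). -/
def IsSubtree {V : Type*} (G : SimpleGraph V) (S : Finset V) (B : Finset (Sym2 V)) : Prop :=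
  S.Nonempty ∧ (∀ e ∈ B, e ∈ G.edgeSet) ∧ (∀ e ∈ B, ∀ v ∈ e, v ∈ S) ∧
  B.card + 1 = S.card ∧
  ∀ u ∈ S, ∀ v ∈ S, (SimpleGraph.fromEdgeSet (↑B : Set (Sym2 V))).Reachable u v

/-- The number of subtrees of a graph `G`. -/
noncomputable def subtreeCount {V : Type*} (G : SimpleGraph V) : ℕ :=
  {p : Finset V × Finset (Sym2 V) | IsSubtree G p.1 p.2}.ncard

/-- The number of edges of `G` external to the subtree `(S, B)` (i.e. not in `B`) having
exactly `c` endvertices in `S`. -/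
noncomputable def extEdgeCount {V : Type*} (G : SimpleGraph V)
    (S : Finset V) (B : Finset (Sym2 V)) (c : ℕ) : ℕ :=
  {e : Sym2 V | e ∈ G.edgeSet ∧ e ∉ B ∧ {v | v ∈ e ∧ v ∈ S}.ncard = c}.ncard

/-- `t_{i,j}(G)`: the number of subtrees of `G` with exactly `i` external edges having
precisely one endvertex in the subtree and `j` external edges having both endvertices in
the subtree. -/
noncomputable def subtreeCountExt {V : Type*} (G : SimpleGraph V) (i j : ℕ) : ℕ :=
  {p : Finset V × Finset (Sym2 V) |
    IsSubtree G p.1 p.2 ∧ extEdgeCount G p.1 p.2 1 = i ∧ extEdgeCount G p.1 p.2 2 = j}.ncard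

/-- The smaller endpoint of an edge, for a linearly ordered vertex type. -/
def sym2Min {V : Type*} [LinearOrder V] (e : Sym2 V) : V :=
  Sym2.lift ⟨fun a b => min a b, fun a b => min_comm a b⟩ e

/-- The larger endpoint of an edge, for a linearly ordered vertex type. -/
def sym2Max {V : Type*} [LinearOrder V] (e : Sym2 V) : V :=
  Sym2.lift ⟨fun a b => max a b, fun a b => max_comm a b⟩ e

/-- The `k`-stretch of a (simple) graph `G`: every edge is replaced by a path of `k`
edges, realised by inserting `k − 1` new internal vertices for each edge. -/
def stretch {V : Type*} [LinearOrder V] (G : SimpleGraph V) (k : ℕ) :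
    SimpleGraph (V ⊕ (G.edgeSet × Fin (k - 1))) :=
  SimpleGraph.fromRel (fun p q =>
    match p, q with
    | Sum.inl u, Sum.inl v => k = 1 ∧ G.Adj u v
    | Sum.inl u, Sum.inr ei =>
        (u = sym2Min ei.1.val ∧ (ei.2 : ℕ) = 0) ∨
        (u = sym2Max ei.1.val ∧ (ei.2 : ℕ) = k - 2)
    | Sum.inr _, Sum.inl _ => False
    | Sum.inr ei, Sum.inr ej => ei.1 = ej.1 ∧ (ei.2 : ℕ) + 1 = (ej.2 : ℕ))

section StretchAux

variable {V : Type*} [LinearOrder V]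

lemma sym2_min_max (e : Sym2 V) : s(sym2Min e, sym2Max e) = e := by
  induction e with
  | _ a b =>
    simp only [sym2Min, sym2Max, Sym2.lift_mk]
    rcases le_total a b with h | h
    · rw [min_eq_left h, max_eq_right h]
    · rw [min_eq_right h, max_eq_left h, Sym2.eq_swap]

lemma sym2_min_adj {G : SimpleGraph V} (e : G.edgeSet) :
    G.Adj (sym2Min e.1) (sym2Max e.1) := by
  rw [← SimpleGraph.mem_edgeSet, sym2_min_max]; exact e.2

lemma sym2_min_ne {G : SimpleGraph V} (e : G.edgeSet) :
    sym2Min e.1 ≠ sym2Max e.1 := (sym2_min_adj e).ne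

/-- The vertex at position `j` on the path replacing `e`. -/
def pos (G : SimpleGraph V) (k : ℕ) (e : G.edgeSet) (j : ℕ) :
    V ⊕ (G.edgeSet × Fin (k - 1)) :=
  if j = 0 then Sum.inl (sym2Min e.1)
  else if h : j - 1 < k - 1 then Sum.inr (e, ⟨j - 1, h⟩) else Sum.inl (sym2Max e.1)

/-- The `j`-th edge on the path replacing `e`. -/
def ped (G : SimpleGraph V) (k : ℕ) (e : G.edgeSet) (j : ℕ) :
    Sym2 (V ⊕ (G.edgeSet × Fin (k - 1))) := s(pos G k e j, pos G k e (j + 1))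

variable {G : SimpleGraph V} {k : ℕ}

lemma pos_zero (e : G.edgeSet) : pos G k e 0 = Sum.inl (sym2Min e.1) := by simp [pos]

lemma pos_last (hk : 1 ≤ k) (e : G.edgeSet) : pos G k e k = Sum.inl (sym2Max e.1) := by
  have : k ≠ 0 := by omega
  simp [pos, this]

lemma pos_mid (e : G.edgeSet) (i : Fin (k - 1)) : pos G k e (i + 1) = Sum.inr (e, i) := by
  simp [pos]

lemma pos_mid' (e : G.edgeSet) (j : ℕ) (h0 : 0 < j) (h1 : j < k) :
    pos G k e j = Sum.inr (e, ⟨j - 1, by omega⟩) := by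
  have h2 : j ≠ 0 := by omega
  have h3 : j - 1 < k - 1 := by omega
  simp [pos, h2, h3]

lemma pos_cases (hk : 1 ≤ k) (e : G.edgeSet) (j : ℕ) (hj : j ≤ k) :
    (j = 0 ∧ pos G k e j = Sum.inl (sym2Min e.1)) ∨
    (j = k ∧ pos G k e j = Sum.inl (sym2Max e.1)) ∨
    (∃ i : Fin (k - 1), j = i + 1 ∧ pos G k e j = Sum.inr (e, i)) := by
  rcases Nat.eq_zero_or_pos j with h | h
  · left; subst h; exact ⟨rfl, pos_zero e⟩
  · rcases Nat.lt_or_ge j k with h' | h'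
    · right; right
      exact ⟨⟨j - 1, by omega⟩, by simp; omega, pos_mid' e j h h'⟩
    · have : j = k := by omega
      subst this
      right; left; exact ⟨rfl, pos_last hk e⟩

lemma pos_inj (hk : 1 ≤ k) (e : G.edgeSet) {j j' : ℕ} (hj : j ≤ k) (hj' : j' ≤ k)
    (h : pos G k e j = pos G k e j') : j = j' := by
  have hne := sym2_min_ne e
  rcases pos_cases hk e j hj with ⟨h1, h2⟩ | ⟨h1, h2⟩ | ⟨i, h1, h2⟩ <;>
  rcases pos_cases hk e j' hj' with ⟨h3, h4⟩ | ⟨h3, h4⟩ | ⟨i', h3, h4⟩ <;>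
  rw [h2, h4] at h <;> simp_all

/-- an internal position determines the edge and the index -/
lemma pos_eq_mid (hk : 1 ≤ k) {e e' : G.edgeSet} {j j' : ℕ} (hj : 0 < j) (hj1 : j < k)
    (hj' : j' ≤ k) (h : pos G k e j = pos G k e' j') : e = e' ∧ j = j' := by
  rw [pos_mid' e j hj hj1] at h
  rcases pos_cases hk e' j' hj' with ⟨h1, h2⟩ | ⟨h1, h2⟩ | ⟨i, h1, h2⟩ <;> rw [h2] at h
  · simp at h
  · simp at h
  · simp only [Sum.inr.injEq, Prod.mk.injEq] at h
    refine ⟨h.1, ?_⟩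
    rw [h1, ← h.2]; simp; omega

lemma ped_inj (hk : 1 ≤ k) {e e' : G.edgeSet} {j j' : ℕ} (hj : j < k) (hj' : j' < k)
    (h : ped G k e j = ped G k e' j') : e = e' ∧ j = j' := by
  have hee : e = e' := by
    rcases Nat.lt_or_ge k 2 with hk2 | hk2
    · have h1 : k = 1 := by omega
      subst h1
      have h2 : j = 0 := by omega
      have h3 : j' = 0 := by omega
      subst h2 h3
      simp only [ped, pos_zero, zero_add, pos_last le_rfl] at h
      apply Subtype.ext
      rw [← sym2_min_max e.1, ← sym2_min_max e'.1]
      simpa using h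
    · have h1 : ∃ m, 0 < m ∧ m < k ∧ pos G k e m ∈ ped G k e j := by
        rcases Nat.eq_zero_or_pos j with h0 | h0
        · exact ⟨j + 1, by omega, by omega, by simp [ped]⟩
        · exact ⟨j, by omega, by omega, by simp [ped]⟩
      obtain ⟨m, hm0, hm1, hm⟩ := h1
      rw [h, ped, Sym2.mem_iff] at hm
      rcases hm with hm | hm
      · exact (pos_eq_mid hk hm0 hm1 (by omega) hm).1
      · exact (pos_eq_mid hk hm0 hm1 (by omega) hm).1
  refine ⟨hee, ?_⟩
  subst hee
  rw [ped, ped, Sym2.eq_iff] at h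
  rcases h with ⟨h, -⟩ | ⟨h, h'⟩
  · exact pos_inj hk e (by omega) (by omega) h
  · have := pos_inj hk e (by omega) (by omega) h
    have := pos_inj hk e (by omega) (by omega) h'
    omega

lemma pos_ne_succ (hk : 1 ≤ k) (e : G.edgeSet) {j : ℕ} (hj : j < k) :
    pos G k e j ≠ pos G k e (j + 1) := fun h => by
  have := pos_inj hk e (by omega) (by omega) h
  omega

lemma stretch_adj_pos (hk : 1 ≤ k) (e : G.edgeSet) {j : ℕ} (hj : j < k) :
    (stretch G k).Adj (pos G k e j) (pos G k e (j + 1)) := by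
  have hne := pos_ne_succ hk e hj
  rw [stretch, SimpleGraph.fromRel_adj]
  refine ⟨hne, ?_⟩
  rcases pos_cases hk e j (by omega) with ⟨h1, h2⟩ | ⟨h1, h2⟩ | ⟨i, h1, h2⟩ <;>
  rcases pos_cases hk e (j + 1) (by omega) with ⟨h3, h4⟩ | ⟨h3, h4⟩ | ⟨i', h3, h4⟩ <;>
  rw [h2, h4] <;> try omega
  · left; exact ⟨by omega, sym2_min_adj e⟩
  · left; left; exact ⟨rfl, by dsimp only; omega⟩
  · right; right; exact ⟨rfl, by dsimp only; omega⟩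
  · left; exact ⟨rfl, by dsimp only; omega⟩

lemma mem_stretch_edgeSet (hk : 1 ≤ k) (x : Sym2 (V ⊕ (G.edgeSet × Fin (k - 1)))) :
    x ∈ (stretch G k).edgeSet ↔ ∃ e j, j < k ∧ x = ped G k e j := by
  constructor
  · have key : ∀ p q : V ⊕ (G.edgeSet × Fin (k - 1)),
        (match p, q with
        | Sum.inl u, Sum.inl v => k = 1 ∧ G.Adj u v
        | Sum.inl u, Sum.inr ei =>
            (u = sym2Min ei.1.val ∧ (ei.2 : ℕ) = 0) ∨
            (u = sym2Max ei.1.val ∧ (ei.2 : ℕ) = k - 2)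
        | Sum.inr _, Sum.inl _ => False
        | Sum.inr ei, Sum.inr ej => ei.1 = ej.1 ∧ (ei.2 : ℕ) + 1 = (ej.2 : ℕ)) →
        ∃ e j, j < k ∧ s(p, q) = ped G k e j := by
      rintro (u | ⟨e, i⟩) (v | ⟨e', i'⟩) h
      · obtain ⟨h1, h2⟩ := h
        subst h1
        refine ⟨⟨s(u, v), h2⟩, 0, by omega, ?_⟩
        have h3 := sym2_min_max (s(u, v))
        rw [ped, pos_zero, zero_add, pos_last le_rfl]
        rw [Sym2.eq_iff] at h3 ⊢
        simp only [Sum.inl.injEq]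
        tauto
      · rcases h with ⟨h1, h2⟩ | ⟨h1, h2⟩
        · refine ⟨e', 0, by omega, ?_⟩
          have := pos_mid e' i'
          simp only at h1 h2
          rw [h2] at this
          rw [ped, pos_zero, this, h1]
        · have hi := i'.2
          simp only at h1 h2
          refine ⟨e', k - 1, by omega, ?_⟩
          have := pos_mid e' i'
          rw [h2, show k - 2 + 1 = k - 1 by omega] at this
          rw [ped, this, show k - 1 + 1 = k by omega, pos_last hk, h1, Sym2.eq_swap]
      · exact h.elim
      · obtain ⟨h1, h2⟩ := h
        simp only at h1 h2
        subst h1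
        have hi := i'.2
        refine ⟨e, i + 1, by omega, ?_⟩
        rw [ped, pos_mid, h2, pos_mid]
    induction x with
    | _ p q =>
      intro h
      rw [SimpleGraph.mem_edgeSet, stretch, SimpleGraph.fromRel_adj] at h
      rcases h.2 with h | h
      · exact key p q h
      · rw [Sym2.eq_swap]; exact key q p h
  · rintro ⟨e, j, hj, rfl⟩
    exact stretch_adj_pos hk e hj

abbrev EG {W : Type*} (B : Finset (Sym2 W)) : SimpleGraph W :=
  SimpleGraph.fromEdgeSet (↑B : Set (Sym2 W))

lemma seg_reach (hk : 1 ≤ k) {B' : Finset (Sym2 (V ⊕ (G.edgeSet × Fin (k - 1))))}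
    (e : G.edgeSet) {m n : ℕ} (hmn : m ≤ n) (hn : n ≤ k)
    (h : ∀ j, m ≤ j → j < n → ped G k e j ∈ B') :
    (EG B').Reachable (pos G k e m) (pos G k e n) := by
  induction n, hmn using Nat.le_induction with
  | base => exact SimpleGraph.Reachable.refl _
  | succ n hmn ih =>
    refine (ih (by omega) (fun j h1 h2 => h j h1 (by omega))).trans ?_
    apply SimpleGraph.Adj.reachable
    rw [EG, SimpleGraph.fromEdgeSet_adj]
    exact ⟨h n hmn (by omega), pos_ne_succ hk e (by omega)⟩

/-- invariants along walks starting at an original vertex -/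
def LR (B' : Finset (Sym2 (V ⊕ (G.edgeSet × Fin (k - 1))))) (R : V → Prop)
    (e : G.edgeSet) (j : ℕ) : Prop :=
  (R (sym2Min e.1) ∧ ∀ i < j, ped G k e i ∈ B') ∨
  (R (sym2Max e.1) ∧ ∀ i, j ≤ i → i < k → ped G k e i ∈ B')

def QQ (B' : Finset (Sym2 (V ⊕ (G.edgeSet × Fin (k - 1))))) (R : V → Prop) :
    V ⊕ (G.edgeSet × Fin (k - 1)) → Prop :=
  Sum.elim R (fun p => LR B' R p.1 (p.2 + 1))

lemma QQ_pos (hk : 1 ≤ k) {B' : Finset (Sym2 (V ⊕ (G.edgeSet × Fin (k - 1))))} {R : V → Prop}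
    (hR : ∀ e : G.edgeSet, (∀ j < k, ped G k e j ∈ B') → (R (sym2Min e.1) ↔ R (sym2Max e.1)))
    (e : G.edgeSet) {j : ℕ} (hj : j ≤ k) : QQ B' R (pos G k e j) ↔ LR B' R e j := by
  rcases pos_cases hk e j hj with ⟨h1, h2⟩ | ⟨h1, h2⟩ | ⟨i, h1, h2⟩ <;> rw [h2] <;>
    simp only [QQ, Sum.elim_inl, Sum.elim_inr, LR]
  · subst h1
    constructor
    · intro h; left; exact ⟨h, by simp⟩
    · rintro (h | h)
      · exact h.1
      · exact (hR e (fun j hj => h.2 j (by omega) hj)).2 h.1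
  · subst h1
    constructor
    · intro h; right; exact ⟨h, fun i h1 h2 => by omega⟩
    · rintro (h | h)
      · exact (hR e h.2).1 h.1
      · exact h.1
  · rw [h1]

lemma QQ_reach (hk : 1 ≤ k) {B' : Finset (Sym2 (V ⊕ (G.edgeSet × Fin (k - 1))))} {R : V → Prop}
    (hB : ∀ x ∈ B', x ∈ (stretch G k).edgeSet)
    (hR : ∀ e : G.edgeSet, (∀ j < k, ped G k e j ∈ B') → (R (sym2Min e.1) ↔ R (sym2Max e.1)))
    {x y : V ⊕ (G.edgeSet × Fin (k - 1))} (hx : QQ B' R x)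
    (h : (EG B').Reachable x y) : QQ B' R y := by
  obtain ⟨w⟩ := h
  induction w with
  | nil => exact hx
  | @cons x y z hxy w ih =>
    apply ih
    rw [EG, SimpleGraph.fromEdgeSet_adj] at hxy
    have hm : s(x, y) ∈ B' := hxy.1
    obtain ⟨e, j, hj, hej⟩ := (mem_stretch_edgeSet hk _).1 (hB _ hm)
    rw [hej] at hm
    rw [ped, Sym2.eq_iff] at hej
    rcases hej with ⟨rfl, rfl⟩ | ⟨rfl, rfl⟩
    · rw [QQ_pos hk hR e (by omega)] at hx ⊢
      rcases hx with ⟨h1, h2⟩ | ⟨h1, h2⟩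
      · left; refine ⟨h1, fun i hi => ?_⟩
        rcases Nat.lt_or_ge i j with h | h
        · exact h2 i h
        · have : i = j := by omega
          subst this; exact hm
      · right; exact ⟨h1, fun i hi hi' => h2 i (by omega) hi'⟩
    · rw [QQ_pos hk hR e (by omega)] at hx ⊢
      rcases hx with ⟨h1, h2⟩ | ⟨h1, h2⟩
      · left; exact ⟨h1, fun i hi => h2 i (by omega)⟩
      · right; refine ⟨h1, fun i hi hi' => ?_⟩
        rcases Nat.lt_or_ge j i with h | h
        · exact h2 i (by omega) hi'
        · have : i = j := by omega
          subst this; exact hm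


lemma card_edges_eq (hk : 1 ≤ k) [Fintype G.edgeSet]
    {B' : Finset (Sym2 (V ⊕ (G.edgeSet × Fin (k - 1))))}
    (hB : ∀ x ∈ B', x ∈ (stretch G k).edgeSet) :
    B'.card = ∑ e : G.edgeSet, ((Finset.range k).filter (fun j => ped G k e j ∈ B')).card := by
  rw [← Finset.card_sigma]
  symm
  refine Finset.card_bij (fun p _ => ped G k p.1 p.2) ?_ ?_ ?_
  · rintro ⟨e, j⟩ h
    simp only [Finset.mem_sigma, Finset.mem_univ, true_and, Finset.mem_filter] at h
    exact h.2
  · rintro ⟨e, j⟩ h ⟨e', j'⟩ h' heq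
    simp only [Finset.mem_sigma, Finset.mem_univ, true_and, Finset.mem_filter,
      Finset.mem_range] at h h'
    obtain ⟨rfl, h2⟩ := ped_inj hk h.1 h'.1 heq
    subst h2
    rfl
  · intro x hx
    obtain ⟨e, j, hj, rfl⟩ := (mem_stretch_edgeSet hk _).1 (hB x hx)
    exact ⟨⟨e, j⟩, by simp [hj, hx], rfl⟩

lemma card_verts_eq [Fintype G.edgeSet]
    (S' : Finset (V ⊕ (G.edgeSet × Fin (k - 1)))) :
    S'.card = S'.toLeft.card +
      ∑ e : G.edgeSet, ((Finset.range (k - 1)).filter (fun i => pos G k e (i + 1) ∈ S')).card := by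
  rw [← Finset.card_toLeft_add_card_toRight, ← Finset.card_sigma]
  congr 1
  refine Finset.card_bij (fun p _ => ⟨p.1, p.2⟩) ?_ ?_ ?_
  · rintro ⟨e, i⟩ h
    rw [Finset.mem_toRight] at h
    simp [pos_mid, h]
  · rintro ⟨e, i⟩ h ⟨e', i'⟩ h' heq
    simp only [Sigma.mk.injEq, heq_eq_eq] at heq
    obtain ⟨rfl, h2⟩ := heq
    rw [Fin.ext h2]
  · rintro ⟨e, i⟩ h
    simp only [Finset.mem_sigma, Finset.mem_univ, true_and, Finset.mem_filter,
      Finset.mem_range] at h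
    refine ⟨(e, ⟨i, h.1⟩), ?_, rfl⟩
    rw [Finset.mem_toRight, ← pos_mid]
    exact h.2

/-- vertex set built from `S` and the choices `c` -/
noncomputable def PhiS [Fintype V] [Fintype G.edgeSet] (k : ℕ) (S : Finset V)
    (c : G.edgeSet → ℕ × ℕ) : Finset (V ⊕ (G.edgeSet × Fin (k - 1))) :=
  S.disjSum (Finset.univ.filter (fun p : G.edgeSet × Fin (k - 1) =>
    (p.2 : ℕ) < (c p.1).1 ∨ (c p.1).2 ≤ p.2))

/-- edge set built from the choices `c` -/
noncomputable def PhiB [Fintype V] [Fintype G.edgeSet] (k : ℕ)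
    (c : G.edgeSet → ℕ × ℕ) : Finset (Sym2 (V ⊕ (G.edgeSet × Fin (k - 1)))) :=
  Finset.univ.filter (fun x => ∃ e j, j < k ∧ x = ped G k e j ∧ (j < (c e).1 ∨ (c e).2 < j))

/-- admissible choices at an edge -/
noncomputable def choices (G : SimpleGraph V) (k : ℕ) (p : Finset V × Finset (Sym2 V))
    (e : G.edgeSet) : Finset (ℕ × ℕ) :=
  (Finset.range (k + 1) ×ˢ Finset.range (k + 1)).filter (fun q =>
    if e.1 ∈ p.2 then q.1 = k ∧ q.2 = k else
      q.1 ≤ q.2 ∧ q.2 < k ∧ (0 < q.1 → sym2Min e.1 ∈ p.1) ∧ (q.2 + 1 < k → sym2Max e.1 ∈ p.1))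

set_option linter.unusedSectionVars false

variable [Fintype V] [Fintype G.edgeSet]

lemma ped_mem_PhiB (hk : 1 ≤ k) {c : G.edgeSet → ℕ × ℕ} {e : G.edgeSet} {j : ℕ} (hj : j < k) :
    ped G k e j ∈ PhiB k c ↔ (j < (c e).1 ∨ (c e).2 < j) := by
  simp only [PhiB, Finset.mem_filter, Finset.mem_univ, true_and]
  constructor
  · rintro ⟨e', j', hj', h1, h2⟩
    obtain ⟨rfl, rfl⟩ := ped_inj hk hj hj' h1
    exact h2
  · intro h; exact ⟨e, j, hj, rfl, h⟩

lemma PhiB_sub (hk : 1 ≤ k) {c : G.edgeSet → ℕ × ℕ} :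
    ∀ x ∈ PhiB k c, x ∈ (stretch G k).edgeSet := by
  intro x hx
  simp only [PhiB, Finset.mem_filter, Finset.mem_univ, true_and] at hx
  obtain ⟨e', j', hj', h1, h2⟩ := hx
  exact (mem_stretch_edgeSet hk _).2 ⟨e', j', hj', h1⟩

lemma inl_mem_PhiS {S : Finset V} {c : G.edgeSet → ℕ × ℕ} {v : V} :
    Sum.inl v ∈ PhiS k S c ↔ v ∈ S := by
  simp [PhiS]

lemma pos_mem_PhiS {S : Finset V} {c : G.edgeSet → ℕ × ℕ} {e : G.edgeSet} {i : ℕ}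
    (hi : i < k - 1) :
    pos G k e (i + 1) ∈ PhiS k S c ↔ (i < (c e).1 ∨ (c e).2 ≤ i) := by
  have := pos_mid e ⟨i, hi⟩
  simp only at this
  rw [this]
  simp [PhiS]

lemma local_card {a b k : ℕ} (hab : a ≤ b) (hb : b < k) :
    ((Finset.range k).filter (fun j => j < a ∨ b < j)).card =
    ((Finset.range (k - 1)).filter (fun j => j < a ∨ b ≤ j)).card := by
  have h1 : (Finset.range k).filter (fun j => j < a ∨ b < j) = Finset.range a ∪ Finset.Ioo b k := by
    ext x; simp; omega
  have h2 : (Finset.range (k - 1)).filter (fun j => j < a ∨ b ≤ j) =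
      Finset.range a ∪ Finset.Ico b (k - 1) := by
    ext x; simp; omega
  rw [h1, h2, Finset.card_union_of_disjoint, Finset.card_union_of_disjoint]
  · simp; omega
  · rw [Finset.disjoint_left]; intro x; simp; omega
  · rw [Finset.disjoint_left]; intro x; simp; omega

lemma choices_spec {p : Finset V × Finset (Sym2 V)} {e : G.edgeSet} {q : ℕ × ℕ} :
    q ∈ choices G k p e ↔ (e.1 ∈ p.2 ∧ q.1 = k ∧ q.2 = k) ∨
      (e.1 ∉ p.2 ∧ q.1 ≤ q.2 ∧ q.2 < k ∧ (0 < q.1 → sym2Min e.1 ∈ p.1) ∧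
        (q.2 + 1 < k → sym2Max e.1 ∈ p.1)) := by
  simp only [choices, Finset.mem_filter, Finset.mem_product, Finset.mem_range]
  split_ifs with h
  · simp only [h, true_and, not_true_eq_false, false_and, or_false]
    omega
  · simp only [h, false_and, not_false_eq_true, true_and, false_or]
    constructor
    · exact fun h => h.2
    · intro h; exact ⟨⟨by omega, by omega⟩, h⟩

lemma Phi_card (hk : 1 ≤ k) {p : Finset V × Finset (Sym2 V)} {c : G.edgeSet → ℕ × ℕ}
    (hB : ∀ e ∈ p.2, e ∈ G.edgeSet) (hc : ∀ e, c e ∈ choices G k p e) :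
    (PhiB k c).card + p.1.card = (PhiS k p.1 c).card + p.2.card := by
  rw [card_edges_eq hk (PhiB_sub hk), card_verts_eq]
  have h1 : (PhiS k p.1 c).toLeft = p.1 := by simp [PhiS]
  have h2 : p.2.card = ∑ e : G.edgeSet, if e.1 ∈ p.2 then 1 else 0 := by
    rw [← Finset.card_filter]
    symm
    refine Finset.card_bij (fun e _ => e.1) ?_ ?_ ?_
    · intro e he; simpa using he
    · intro e _ e' _ h; exact Subtype.ext h
    · intro e he; exact ⟨⟨e, hB e he⟩, by simpa using he, rfl⟩
  rw [h1, h2, add_assoc, ← Finset.sum_add_distrib, add_comm]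
  congr 1
  refine Finset.sum_congr rfl fun e _ => ?_
  have h3 : (Finset.range k).filter (fun j => ped G k e j ∈ PhiB k c) =
      (Finset.range k).filter (fun j => j < (c e).1 ∨ (c e).2 < j) := by
    apply Finset.filter_congr
    intro j hj; rw [ped_mem_PhiB hk (by simpa using hj)]
  have h4 : (Finset.range (k - 1)).filter (fun i => pos G k e (i + 1) ∈ PhiS k p.1 c) =
      (Finset.range (k - 1)).filter (fun j => j < (c e).1 ∨ (c e).2 ≤ j) := by
    apply Finset.filter_congr
    intro j hj; rw [pos_mem_PhiS (by simpa using hj)]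
  rw [h3, h4]
  rcases choices_spec.1 (hc e) with ⟨h, ha, hb⟩ | ⟨h, ha, hb, -⟩
  · rw [ha, hb, Finset.filter_true_of_mem, Finset.filter_true_of_mem]
    · simp [h]; omega
    · intro x hx; simp at hx; omega
    · intro x hx; simp at hx; omega
  · rw [local_card ha hb]; simp [h]

/-- endpoints of fully used and partially used paths -/
lemma choices_left {p : Finset V × Finset (Sym2 V)} {e : G.edgeSet} {q : ℕ × ℕ}
    (hB : ∀ e ∈ p.2, ∀ v ∈ e, v ∈ p.1) (hq : q ∈ choices G k p e) (h : 0 < q.1) :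
    sym2Min e.1 ∈ p.1 := by
  rcases choices_spec.1 hq with ⟨h1, -⟩ | h1
  · apply hB _ h1
    have := Sym2.mem_mk_left (sym2Min e.1) (sym2Max e.1)
    rwa [sym2_min_max] at this
  · exact h1.2.2.2.1 h

lemma choices_right {p : Finset V × Finset (Sym2 V)} {e : G.edgeSet} {q : ℕ × ℕ}
    (hB : ∀ e ∈ p.2, ∀ v ∈ e, v ∈ p.1) (hq : q ∈ choices G k p e) (h : q.2 + 1 < k ∨ q.1 = k)
    (hk : 1 ≤ k) :
    sym2Max e.1 ∈ p.1 := by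
  rcases choices_spec.1 hq with ⟨h1, -⟩ | h1
  · apply hB _ h1
    have := Sym2.mem_mk_right (sym2Min e.1) (sym2Max e.1)
    rwa [sym2_min_max] at this
  · exact h1.2.2.2.2 (by omega)

lemma Phi_subtree (hk : 1 ≤ k) {p : Finset V × Finset (Sym2 V)} {c : G.edgeSet → ℕ × ℕ}
    (hp : IsSubtree G p.1 p.2) (hc : ∀ e, c e ∈ choices G k p e) :
    IsSubtree (stretch G k) (PhiS k p.1 c) (PhiB k c) := by
  obtain ⟨⟨v0, hv0⟩, hB, hBS, hcard, hconn⟩ := hp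
  have hcard' := Phi_card hk hB hc
  have key : ∀ e j, j ≤ k → (0 < (c e).1 ∧ j ≤ (c e).1 ∨ (c e).2 < j ∧ (c e).2 + 1 < k) →
      pos G k e j ∈ PhiS k p.1 c := by
    intro e j hj h
    rcases pos_cases hk e j hj with ⟨h1, h2⟩ | ⟨h1, h2⟩ | ⟨i, h1, h2⟩
    · rw [h2, inl_mem_PhiS]
      exact choices_left hBS (hc e) (by omega)
    · rw [h2, inl_mem_PhiS]
      refine choices_right hBS (hc e) ?_ hk
      have := choices_spec.1 (hc e)
      omega
    · rw [h1, pos_mem_PhiS i.2]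
      omega
  refine ⟨⟨Sum.inl v0, inl_mem_PhiS.2 hv0⟩, PhiB_sub hk, ?_, by omega, ?_⟩
  · intro x hx v hv
    obtain ⟨e, j, hj, rfl⟩ := (mem_stretch_edgeSet hk _).1 (PhiB_sub hk x hx)
    rw [ped_mem_PhiB hk hj] at hx
    rw [ped, Sym2.mem_iff] at hv
    rcases hv with rfl | rfl <;> apply key <;> omega
  · have step1 : ∀ u v, (EG p.2).Reachable u v →
        (EG (PhiB k c)).Reachable (Sum.inl u) (Sum.inl v) := by
      rintro u v ⟨w⟩
      induction w with
      | nil => exact SimpleGraph.Reachable.refl _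
      | @cons u v w huv _ ih =>
        refine SimpleGraph.Reachable.trans ?_ ih
        rw [EG, SimpleGraph.fromEdgeSet_adj] at huv
        have hm : s(u, v) ∈ p.2 := huv.1
        set e : G.edgeSet := ⟨s(u, v), hB _ hm⟩ with he
        have hfull : (EG (PhiB k c)).Reachable (pos G k e 0) (pos G k e k) := by
          apply seg_reach hk e (by omega) le_rfl
          intro j _ hj
          rw [ped_mem_PhiB hk hj]
          rcases choices_spec.1 (hc e) with h | h
          · omega
          · exact absurd hm h.1
        rw [pos_zero, pos_last hk] at hfull
        simp only [he] at hfull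
        have h3 := sym2_min_max (s(u, v))
        rw [Sym2.eq_iff] at h3
        rcases h3 with ⟨h3, h4⟩ | ⟨h3, h4⟩
        · rw [h3, h4] at hfull; exact hfull
        · rw [h3, h4] at hfull; exact hfull.symm
    have step2 : ∀ x ∈ PhiS k p.1 c, ∃ v ∈ p.1, (EG (PhiB k c)).Reachable x (Sum.inl v) := by
      rintro (v | ⟨e, i⟩) hx
      · exact ⟨v, inl_mem_PhiS.1 hx, SimpleGraph.Reachable.refl _⟩
      · have hi := i.2
        rw [← pos_mid] at hx ⊢
        rw [pos_mem_PhiS i.2] at hx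
        rcases hx with hx | hx
        · refine ⟨sym2Min e.1, choices_left hBS (hc e) (by omega), ?_⟩
          rw [← pos_zero (k := k)]
          apply SimpleGraph.Reachable.symm
          apply seg_reach hk e (by omega) (by omega)
          intro j _ hj
          rw [ped_mem_PhiB hk (by omega)]
          omega
        · refine ⟨sym2Max e.1, choices_right hBS (hc e) (by omega) hk, ?_⟩
          rw [← pos_last hk]
          apply seg_reach hk e (by omega) (by omega)
          intro j _ hj
          rw [ped_mem_PhiB hk (by omega)]
          omega
    intro x hx y hy
    obtain ⟨u, hu, h1⟩ := step2 x hx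
    obtain ⟨v, hv, h2⟩ := step2 y hy
    exact h1.trans ((step1 u v (hconn u hu v hv)).trans h2.symm)

lemma exists_Phi (hk : 1 ≤ k) {S' : Finset (V ⊕ (G.edgeSet × Fin (k - 1)))}
    {B' : Finset (Sym2 (V ⊕ (G.edgeSet × Fin (k - 1))))}
    (h : IsSubtree (stretch G k) S' B') {v0 : V} (hv0 : Sum.inl v0 ∈ S') :
    ∃ p : Finset V × Finset (Sym2 V), ∃ c : G.edgeSet → ℕ × ℕ, IsSubtree G p.1 p.2 ∧
      (∀ e, c e ∈ choices G k p e) ∧ PhiS k p.1 c = S' ∧ PhiB k c = B' := by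
  obtain ⟨-, hB, hBS, hcard, hconn⟩ := h
  set B : Finset (Sym2 V) := Finset.univ.filter
    (fun x => ∃ e : G.edgeSet, e.1 = x ∧ ∀ j < k, ped G k e j ∈ B') with hBdef
  have hBmem : ∀ e : G.edgeSet, e.1 ∈ B ↔ ∀ j < k, ped G k e j ∈ B' := by
    intro e
    simp only [hBdef, Finset.mem_filter, Finset.mem_univ, true_and]
    constructor
    · rintro ⟨e', h1, h2⟩
      rwa [← Subtype.ext h1]
    · intro h; exact ⟨e, rfl, h⟩
  have hBsub : ∀ x ∈ B, x ∈ G.edgeSet := by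
    intro x hx
    simp only [hBdef, Finset.mem_filter, Finset.mem_univ, true_and] at hx
    obtain ⟨e, rfl, -⟩ := hx
    exact e.2
  have hR : ∀ u, ∀ e : G.edgeSet, (∀ j < k, ped G k e j ∈ B') →
      ((EG B).Reachable u (sym2Min e.1) ↔ (EG B).Reachable u (sym2Max e.1)) := by
    intro u e he
    have hadj : (EG B).Adj (sym2Min e.1) (sym2Max e.1) := by
      rw [EG, SimpleGraph.fromEdgeSet_adj, sym2_min_max]
      exact ⟨(hBmem e).2 he, sym2_min_ne e⟩
    exact ⟨fun h => h.trans hadj.reachable, fun h => h.trans hadj.symm.reachable⟩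
  have hQ : ∀ u, Sum.inl u ∈ S' → ∀ y ∈ S', QQ B' (fun v => (EG B).Reachable u v) y := by
    intro u hu y hy
    refine QQ_reach hk hB (hR u) (x := Sum.inl u) ?_ (hconn _ hu _ hy)
    simp [QQ]
  have hLR : ∀ e : G.edgeSet, ∀ j, j ≤ k → pos G k e j ∈ S' →
      ((∀ i < j, ped G k e i ∈ B') ∨ (∀ i, j ≤ i → i < k → ped G k e i ∈ B')) := by
    intro e j hj hm
    have := hQ v0 hv0 _ hm
    rw [QQ_pos hk (hR v0) e hj] at this
    exact this.imp And.right And.right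
  have hends : ∀ e : G.edgeSet, ∀ j, ped G k e j ∈ B' →
      pos G k e j ∈ S' ∧ pos G k e (j + 1) ∈ S' := by
    intro e j hj
    exact ⟨hBS _ hj _ (by simp [ped]), hBS _ hj _ (by simp [ped])⟩
  have hc : ∀ e : G.edgeSet, ∃ q : ℕ × ℕ, (((∀ j < k, ped G k e j ∈ B') ∧ q.1 = k ∧ q.2 = k) ∨
      (q.1 ≤ q.2 ∧ q.2 < k ∧ ped G k e q.1 ∉ B' ∧ ped G k e q.2 ∉ B')) ∧
      (∀ j < k, (j < q.1 ∨ q.2 < j) → ped G k e j ∈ B') := by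
    intro e
    by_cases hf : ∀ j < k, ped G k e j ∈ B'
    · exact ⟨(k, k), Or.inl ⟨hf, rfl, rfl⟩, fun j hj _ => hf j hj⟩
    · set M := (Finset.range k).filter (fun j => ped G k e j ∉ B') with hM
      have hne : M.Nonempty := by
        push Not at hf
        obtain ⟨j, hj, hj'⟩ := hf
        exact ⟨j, by simp [hM, hj, hj']⟩
      have h1 := M.min'_mem hne
      have h2 := M.max'_mem hne
      simp only [hM, Finset.mem_filter, Finset.mem_range] at h1 h2
      refine ⟨(M.min' hne, M.max' hne), Or.inr ⟨M.min'_le_max' hne, h2.1, h1.2, h2.2⟩, ?_⟩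
      intro j hj hj'
      by_contra hcon
      have hjM : j ∈ M := by simp [hM, hj, hcon]
      have h3 := M.min'_le j hjM
      have h4 := M.le_max' j hjM
      simp only at hj'
      omega
  choose c hc1 hc2 using hc
  have hcB : ∀ e, c e ∈ choices G k (S'.toLeft, B) e := by
    intro e
    rw [choices_spec]
    rcases hc1 e with ⟨h1, h2, h3⟩ | ⟨h1, h2, h3, h4⟩
    · left; exact ⟨(hBmem e).2 h1, h2, h3⟩
    · right
      refine ⟨fun h => h3 ((hBmem e).1 h _ (by omega)), h1, h2, ?_, ?_⟩
      · intro h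
        have := (hends e 0 (hc2 e 0 (by omega) (by omega))).1
        rw [pos_zero] at this
        simpa using this
      · intro h
        have := (hends e (k - 1) (hc2 e (k - 1) (by omega) (by omega))).2
        rw [show k - 1 + 1 = k by omega, pos_last hk] at this
        simpa using this
  have hPB : PhiB k c = B' := by
    ext x
    constructor
    · intro hx
      obtain ⟨e, j, hj, rfl⟩ := (mem_stretch_edgeSet hk _).1 (PhiB_sub hk x hx)
      rw [ped_mem_PhiB hk hj] at hx
      exact hc2 e j hj hx
    · intro hx
      obtain ⟨e, j, hj, rfl⟩ := (mem_stretch_edgeSet hk _).1 (hB x hx)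
      rw [ped_mem_PhiB hk hj]
      rcases hc1 e with ⟨h1, h2, h3⟩ | ⟨h1, h2, h3, h4⟩
      · omega
      · by_contra hcon
        have hja : j ≠ (c e).1 := by rintro rfl; exact h3 hx
        have hjb : j ≠ (c e).2 := by rintro rfl; exact h4 hx
        rcases hLR e j (by omega) (hends e j hx).1 with h | h
        · exact h3 (h _ (by omega))
        · exact h4 (h _ (by omega) (by omega))
  have hPS : PhiS k S'.toLeft c = S' := by
    ext x
    rcases x with v | ⟨e, i⟩
    · rw [inl_mem_PhiS, Finset.mem_toLeft]
    · have hi := i.2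
      rw [← pos_mid, pos_mem_PhiS i.2]
      constructor
      · rintro (h | h)
        · exact (hends e i (hc2 e i (by omega) (by omega))).2
        · exact (hends e (i + 1) (hc2 e (i + 1) (by omega) (by omega))).1
      · intro h
        rcases hc1 e with ⟨h1, h2, h3⟩ | ⟨h1, h2, h3, h4⟩
        · omega
        · by_contra hcon
          rcases hLR e (i + 1) (by omega) h with h | h
          · exact h3 (h _ (by omega))
          · exact h4 (h _ (by omega) (by omega))
  refine ⟨(S'.toLeft, B), c, ⟨⟨v0, by simpa using hv0⟩, hBsub, ?_, ?_, ?_⟩, hcB, hPS, hPB⟩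
  · intro x hx v hv
    have hxe := hBsub x hx
    have hx' := (hBmem ⟨x, hxe⟩).1 hx
    rw [← sym2_min_max x, Sym2.mem_iff] at hv
    rcases hv with rfl | rfl
    · have := (hends _ 0 (hx' 0 (by omega))).1
      rw [pos_zero] at this
      simpa using this
    · have := (hends _ (k - 1) (hx' (k - 1) (by omega))).2
      rw [show k - 1 + 1 = k by omega, pos_last hk] at this
      simpa using this
  · have := Phi_card hk (p := (S'.toLeft, B)) hBsub hcB
    simp only [hPS, hPB] at this ⊢
    omega
  · intro u hu v hv
    simp only [Finset.mem_toLeft] at hu hv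
    exact hQ u hu _ hv

lemma Phi_inj (hk : 1 ≤ k) {p p' : Finset V × Finset (Sym2 V)} {c c' : G.edgeSet → ℕ × ℕ}
    (hp : IsSubtree G p.1 p.2) (hp' : IsSubtree G p'.1 p'.2)
    (hc : ∀ e, c e ∈ choices G k p e) (hc' : ∀ e, c' e ∈ choices G k p' e)
    (hS : PhiS k p.1 c = PhiS k p'.1 c') (hB : PhiB k c = PhiB k c') : p = p' ∧ c = c' := by
  have hmem : ∀ e : G.edgeSet, ∀ j < k, (j < (c e).1 ∨ (c e).2 < j) ↔
      (j < (c' e).1 ∨ (c' e).2 < j) := by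
    intro e j hj
    rw [← ped_mem_PhiB hk hj, hB, ped_mem_PhiB hk hj]
  have hcc : ∀ e, (c e).1 = (c' e).1 ∧ (c e).2 = (c' e).2 := by
    intro e
    have h1 := hmem e (c e).1
    have h2 := hmem e (c e).2
    have h3 := hmem e (c' e).1
    have h4 := hmem e (c' e).2
    rcases choices_spec.1 (hc e) with ⟨_, h5, h6⟩ | ⟨_, h5, h6, -⟩ <;>
    rcases choices_spec.1 (hc' e) with ⟨_, h7, h8⟩ | ⟨_, h7, h8, -⟩ <;> omega
  have hceq : c = c' := by
    funext e; exact Prod.ext (hcc e).1 (hcc e).2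
  refine ⟨Prod.ext ?_ ?_, hceq⟩
  · ext v
    rw [← inl_mem_PhiS (k := k) (c := c), hS, inl_mem_PhiS]
  · have hh : ∀ e : G.edgeSet, e.1 ∈ p.2 ↔ e.1 ∈ p'.2 := by
      intro e
      have h1 := choices_spec.1 (hc e)
      have h2 := choices_spec.1 (hc' e)
      rw [← hceq] at h2
      constructor
      · intro h
        by_contra h'
        rcases h1 with ⟨g1, h1⟩ | ⟨g1, h1⟩ <;> rcases h2 with ⟨g2, h2⟩ | ⟨g2, h2⟩ <;>
          first | contradiction | omega
      · intro h'
        by_contra h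
        rcases h1 with ⟨g1, h1⟩ | ⟨g1, h1⟩ <;> rcases h2 with ⟨g2, h2⟩ | ⟨g2, h2⟩ <;>
          first | contradiction | omega
    ext x
    exact ⟨fun h => (hh ⟨x, hp.2.1 x h⟩).1 h, fun h => (hh ⟨x, hp'.2.1 x h⟩).2 h⟩

/-- subpaths of internal vertices -/
noncomputable def PsiS (k : ℕ) (e : G.edgeSet) (q : ℕ × ℕ) :
    Finset (V ⊕ (G.edgeSet × Fin (k - 1))) := (Finset.Icc q.1 q.2).image (pos G k e)

noncomputable def PsiB (k : ℕ) (e : G.edgeSet) (q : ℕ × ℕ) :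
    Finset (Sym2 (V ⊕ (G.edgeSet × Fin (k - 1)))) := (Finset.Ico q.1 q.2).image (ped G k e)

lemma Psi_subtree (hk : 1 ≤ k) (e : G.edgeSet) {q : ℕ × ℕ} (h2 : q.1 ≤ q.2)
    (h3 : q.2 < k) : IsSubtree (stretch G k) (PsiS k e q) (PsiB k e q) := by
  refine ⟨?_, ?_, ?_, ?_, ?_⟩
  · exact ⟨pos G k e q.1, Finset.mem_image_of_mem _ (by simp [h2])⟩
  · intro x hx
    simp only [PsiB, Finset.mem_image, Finset.mem_Ico] at hx
    obtain ⟨j, hj, rfl⟩ := hx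
    exact (mem_stretch_edgeSet hk _).2 ⟨e, j, by omega, rfl⟩
  · intro x hx v hv
    simp only [PsiB, Finset.mem_image, Finset.mem_Ico] at hx
    obtain ⟨j, hj, rfl⟩ := hx
    rw [ped, Sym2.mem_iff] at hv
    simp only [PsiS, Finset.mem_image, Finset.mem_Icc]
    rcases hv with rfl | rfl
    · exact ⟨j, by omega, rfl⟩
    · exact ⟨j + 1, by omega, rfl⟩
  · rw [PsiB, PsiS, Finset.card_image_of_injOn, Finset.card_image_of_injOn]
    · simp; omega
    · intro a ha b hb hab
      simp only [Finset.coe_Icc, Set.mem_Icc] at ha hb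
      exact pos_inj hk e (by omega) (by omega) hab
    · intro a ha b hb hab
      simp only [Finset.coe_Ico, Set.mem_Ico] at ha hb
      exact (ped_inj hk (by omega) (by omega) hab).2
  · have key : ∀ x ∈ PsiS k e q, (EG (PsiB k e q)).Reachable (pos G k e q.1) x := by
      intro x hx
      simp only [PsiS, Finset.mem_image, Finset.mem_Icc] at hx
      obtain ⟨j, hj, rfl⟩ := hx
      apply seg_reach hk e (by omega) (by omega)
      intro i hi hi'
      exact Finset.mem_image_of_mem _ (by simp; omega)
    intro u hu v hv
    exact (key u hu).symm.trans (key v hv)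

lemma PsiS_mem (hk : 1 ≤ k) {e e' : G.edgeSet} {q : ℕ × ℕ} {j : ℕ}
    (h3 : q.2 < k) (hj : 0 < j) (hj' : j < k) :
    pos G k e' j ∈ PsiS k e q ↔ e' = e ∧ q.1 ≤ j ∧ j ≤ q.2 := by
  simp only [PsiS, Finset.mem_image, Finset.mem_Icc]
  constructor
  · rintro ⟨i, hi, h⟩
    obtain ⟨rfl, rfl⟩ := pos_eq_mid hk hj hj' (by omega) h.symm
    exact ⟨rfl, hi⟩
  · rintro ⟨rfl, h⟩
    exact ⟨j, h, rfl⟩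

lemma Psi_inj (hk : 1 ≤ k) {e e' : G.edgeSet} {q q' : ℕ × ℕ} (h1 : 1 ≤ q.1) (h2 : q.1 ≤ q.2)
    (h3 : q.2 < k) (h1' : 1 ≤ q'.1) (h2' : q'.1 ≤ q'.2) (h3' : q'.2 < k)
    (h : PsiS k e q = PsiS k e' q') : e = e' ∧ q = q' := by
  have a1 : e = e' ∧ q'.1 ≤ q.1 ∧ q.1 ≤ q'.2 := by
    rw [← PsiS_mem hk h3' (by omega) (by omega), ← h, PsiS_mem hk h3 (by omega) (by omega)]
    exact ⟨rfl, by omega⟩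
  have a2 : e = e' ∧ q'.1 ≤ q.2 ∧ q.2 ≤ q'.2 := by
    rw [← PsiS_mem hk h3' (by omega) (by omega), ← h, PsiS_mem hk h3 (by omega) (by omega)]
    exact ⟨rfl, by omega⟩
  have a3 : e' = e ∧ q.1 ≤ q'.1 ∧ q'.1 ≤ q.2 := by
    rw [← PsiS_mem hk h3 (by omega) (by omega), h, PsiS_mem hk h3' (by omega) (by omega)]
    exact ⟨rfl, by omega⟩
  have a4 : e' = e ∧ q.1 ≤ q'.2 ∧ q'.2 ≤ q.2 := by
    rw [← PsiS_mem hk h3 (by omega) (by omega), h, PsiS_mem hk h3' (by omega) (by omega)]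
    exact ⟨rfl, by omega⟩
  exact ⟨a1.1, Prod.ext (by omega) (by omega)⟩

lemma exists_Psi (hk : 1 ≤ k) {S' : Finset (V ⊕ (G.edgeSet × Fin (k - 1)))}
    {B' : Finset (Sym2 (V ⊕ (G.edgeSet × Fin (k - 1))))}
    (h : IsSubtree (stretch G k) S' B') (hno : ∀ v, Sum.inl v ∉ S') :
    ∃ (e : G.edgeSet) (q : ℕ × ℕ), 1 ≤ q.1 ∧ q.1 ≤ q.2 ∧ q.2 < k ∧
      PsiS k e q = S' ∧ PsiB k e q = B' := by
  obtain ⟨⟨x0, hx0⟩, hB, hBS, hcard, hconn⟩ := h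
  obtain ⟨e, m, rfl, hm0, hmk⟩ : ∃ e m, x0 = pos G k e m ∧ 0 < m ∧ m < k := by
    rcases x0 with v | ⟨e, i⟩
    · exact absurd hx0 (hno v)
    · exact ⟨e, i + 1, (pos_mid e i).symm, by omega, by omega⟩
  have hint : ∀ e' j, j ≤ k → pos G k e' j ∈ S' → 0 < j ∧ j < k := by
    intro e' j hj hm
    rcases pos_cases hk e' j hj with ⟨h1, h2⟩ | ⟨h1, h2⟩ | ⟨i, h1, h2⟩
    · exact absurd (h2 ▸ hm) (hno _)
    · exact absurd (h2 ▸ hm) (hno _)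
    · omega
  have hends : ∀ e' : G.edgeSet, ∀ j, ped G k e' j ∈ B' →
      pos G k e' j ∈ S' ∧ pos G k e' (j + 1) ∈ S' := by
    intro e j hj
    exact ⟨hBS _ hj _ (by simp [ped]), hBS _ hj _ (by simp [ped])⟩
  have key : ∀ m x, (EG B').Reachable x (pos G k e m) → ∀ n, 0 < n → n < k → 0 < m → m < k →
      x = pos G k e n →
      ∀ j, (m ≤ j ∧ j < n ∨ n ≤ j ∧ j < m) → ped G k e j ∈ B' := by
    rintro m x ⟨w⟩
    generalize hy : pos G k e m = y at w
    induction w with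
    | nil =>
      intro n hn0 hnk hm0 hmk hx j hj
      rw [hx] at hy
      have := pos_inj hk e (by omega) (by omega) hy
      omega
    | @cons x z y hxz w ih =>
      intro n hn0 hnk hm0 hmk hx j hj
      rw [EG, SimpleGraph.fromEdgeSet_adj] at hxz
      have hmm : s(x, z) ∈ B' := hxz.1
      obtain ⟨e1, j1, hj1, hej⟩ := (mem_stretch_edgeSet hk _).1 (hB _ hmm)
      rw [hej] at hmm
      have he := hends e1 j1 hmm
      have i1 := hint e1 j1 (by omega) he.1
      have i2 := hint e1 (j1 + 1) (by omega) he.2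
      rw [ped, Sym2.eq_iff] at hej
      rcases hej with ⟨hxa, hza⟩ | ⟨hxa, hza⟩
      · obtain ⟨rfl, rfl⟩ := pos_eq_mid hk hn0 hnk (by omega) (hx.symm.trans hxa)
        by_cases hjn : j = n
        · subst hjn; exact hmm
        · exact ih hy (n + 1) (by omega) (by omega) hm0 hmk hza j (by omega)
      · obtain ⟨rfl, rfl⟩ := pos_eq_mid hk hn0 hnk (by omega) (hx.symm.trans hxa)
        by_cases hjn : j = j1
        · subst hjn; exact hmm
        · exact ih hy j1 (by omega) (by omega) hm0 hmk hza j (by omega)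
  have hsame : ∀ x y, (EG B').Reachable x y → ∀ m, 0 < m → m < k → x = pos G k e m →
      ∃ n, 0 < n ∧ n < k ∧ y = pos G k e n := by
    rintro x y ⟨w⟩
    induction w with
    | nil => intro m h1 h2 h3; exact ⟨m, h1, h2, h3⟩
    | @cons x z y hxz w ih =>
      intro n hn0 hnk hx
      rw [EG, SimpleGraph.fromEdgeSet_adj] at hxz
      have hmm : s(x, z) ∈ B' := hxz.1
      obtain ⟨e1, j1, hj1, hej⟩ := (mem_stretch_edgeSet hk _).1 (hB _ hmm)
      rw [hej] at hmm
      have he := hends e1 j1 hmm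
      have i1 := hint e1 j1 (by omega) he.1
      have i2 := hint e1 (j1 + 1) (by omega) he.2
      rw [ped, Sym2.eq_iff] at hej
      rcases hej with ⟨hxa, hza⟩ | ⟨hxa, hza⟩
      · obtain ⟨rfl, rfl⟩ := pos_eq_mid hk hn0 hnk (by omega) (hx.symm.trans hxa)
        exact ih (n + 1) (by omega) (by omega) hza
      · obtain ⟨rfl, rfl⟩ := pos_eq_mid hk hn0 hnk (by omega) (hx.symm.trans hxa)
        exact ih j1 (by omega) (by omega) hza
  set M := (Finset.range k).filter (fun j => pos G k e j ∈ S') with hM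
  have hne : M.Nonempty := ⟨m, by simp [hM, hmk, hx0]⟩
  have m1 := M.min'_mem hne
  have m2 := M.max'_mem hne
  have m3 : ∀ j, j < k → pos G k e j ∈ S' → M.min' hne ≤ j ∧ j ≤ M.max' hne := by
    intro j hj hj'
    have : j ∈ M := by simp [hM, hj, hj']
    exact ⟨M.min'_le j this, M.le_max' j this⟩
  have m4 := M.min'_le_max' hne
  generalize M.min' hne = a at *
  generalize M.max' hne = b at *
  simp only [hM, Finset.mem_filter, Finset.mem_range] at m1 m2
  have ha := hint e a (by omega) m1.2
  have hb := hint e b (by omega) m2.2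
  have hseg : ∀ j, a ≤ j → j < b → ped G k e j ∈ B' := by
    intro j h1 h2
    exact key b _ (hconn _ m1.2 _ m2.2) a (by omega) (by omega) (by omega) (by omega) rfl j
      (by omega)
  refine ⟨e, (a, b), by simp only; omega, m4, m2.1, ?_, ?_⟩
  · ext x
    simp only [PsiS, Finset.mem_image, Finset.mem_Icc]
    constructor
    · rintro ⟨j, hj, rfl⟩
      rcases Nat.lt_or_ge j b with h | h
      · exact (hends e j (hseg j hj.1 h)).1
      · have : j = b := by omega
        subst this; exact m2.2
    · intro hx
      obtain ⟨n, hn0, hnk, rfl⟩ := hsame _ x (hconn _ hx0 _ hx) m hm0 hmk rfl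
      exact ⟨n, m3 n hnk hx, rfl⟩
  · ext x
    simp only [PsiB, Finset.mem_image, Finset.mem_Ico]
    constructor
    · rintro ⟨j, hj, rfl⟩
      exact hseg j hj.1 hj.2
    · intro hx
      obtain ⟨e1, j1, hj1, rfl⟩ := (mem_stretch_edgeSet hk _).1 (hB _ hx)
      have he := hends e1 j1 hx
      have i1 := hint e1 j1 (by omega) he.1
      have i2 := hint e1 (j1 + 1) (by omega) he.2
      obtain ⟨n, hn0, hnk, hn⟩ := hsame _ _ (hconn _ hx0 _ he.1) m hm0 hmk rfl
      obtain ⟨rfl, rfl⟩ := pos_eq_mid hk i1.1 i1.2 (by omega) hn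
      have n1 := m3 j1 (by omega) he.1
      have n2 := m3 (j1 + 1) (by omega) he.2
      exact ⟨j1, by omega, rfl⟩

lemma sum_succ_choose (k : ℕ) : ∑ b ∈ Finset.range k, (b + 1) = (k + 1).choose 2 := by
  induction k with
  | zero => simp
  | succ n ih => 
    rw [Finset.sum_range_succ, ih, Nat.choose_succ_succ' (n + 1) 1]
    simp; omega

lemma card_pairs (k : ℕ) : ((Finset.range (k + 1) ×ˢ Finset.range (k + 1)).filter
    (fun q : ℕ × ℕ => q.1 ≤ q.2 ∧ q.2 < k)).card = (k + 1).choose 2 := by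
  rw [← sum_succ_choose]
  rw [show ∑ b ∈ Finset.range k, (b + 1) = ∑ b ∈ Finset.range k, (Finset.range (b + 1)).card by simp,
    ← Finset.card_sigma]
  refine Finset.card_bij (fun q _ => ⟨q.2, q.1⟩) ?_ ?_ ?_
  · rintro ⟨a, b⟩ h; simp at h ⊢; omega
  · rintro ⟨a, b⟩ h ⟨a', b'⟩ h' heq
    simp at heq ⊢; omega
  · rintro ⟨b, a⟩ h
    refine ⟨(a, b), ?_, rfl⟩
    simp at h ⊢; omega

lemma card_pairs' (k : ℕ) (hk : 1 ≤ k) : ((Finset.range k ×ˢ Finset.range k).filter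
    (fun q : ℕ × ℕ => 1 ≤ q.1 ∧ q.1 ≤ q.2)).card = k.choose 2 := by
  obtain ⟨n, rfl⟩ : ∃ n, k = n + 1 := ⟨k - 1, by omega⟩
  rw [← card_pairs]
  refine Finset.card_bij (fun q _ => (q.1 - 1, q.2 - 1)) ?_ ?_ ?_
  · rintro ⟨a, b⟩ h; simp at h ⊢; omega
  · rintro ⟨a, b⟩ h ⟨a', b'⟩ h' heq
    simp at heq h h' ⊢; omega
  · rintro ⟨a, b⟩ h
    refine ⟨(a + 1, b + 1), ?_, by simp⟩
    simp at h ⊢; omega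

lemma ends_ncard (e : G.edgeSet) (S : Finset V) :
    {v | v ∈ e.1 ∧ v ∈ S}.ncard =
      (if sym2Min e.1 ∈ S then 1 else 0) + (if sym2Max e.1 ∈ S then 1 else 0) := by
  have hne := sym2_min_ne e
  have h : {v | v ∈ e.1 ∧ v ∈ S} =
      ((({sym2Min e.1, sym2Max e.1} : Finset V).filter (· ∈ S) : Finset V) : Set V) := by
    ext v
    have : v ∈ e.1 ↔ v = sym2Min e.1 ∨ v = sym2Max e.1 := by
      conv_lhs => rw [← sym2_min_max e.1]
      exact Sym2.mem_iff
    simp [this]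
  rw [h, Set.ncard_coe_finset, Finset.card_filter, Finset.sum_pair hne]

lemma card_choices (hk : 1 ≤ k) (p : Finset V × Finset (Sym2 V)) (e : G.edgeSet) :
    (choices G k p e).card =
      (if e.1 ∉ p.2 ∧ {v | v ∈ e.1 ∧ v ∈ p.1}.ncard = 1 then k else 1) *
      (if e.1 ∉ p.2 ∧ {v | v ∈ e.1 ∧ v ∈ p.1}.ncard = 2 then (k + 1).choose 2 else 1) := by
  rw [ends_ncard]
  by_cases h : e.1 ∈ p.2
  · have : choices G k p e = {(k, k)} := by
      ext ⟨a, b⟩; rw [choices_spec]; simp [h]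
    simp [this, h]
  · by_cases h1 : sym2Min e.1 ∈ p.1 <;> by_cases h2 : sym2Max e.1 ∈ p.1
    · have : choices G k p e = (Finset.range (k + 1) ×ˢ Finset.range (k + 1)).filter
          (fun q : ℕ × ℕ => q.1 ≤ q.2 ∧ q.2 < k) := by
        ext ⟨a, b⟩; rw [choices_spec]; simp [h, h1, h2]; omega
      rw [this, card_pairs]; simp [h, h1, h2]
    · have : choices G k p e = (Finset.range k).image (fun a => (a, k - 1)) := by
        ext ⟨a, b⟩; rw [choices_spec]; simp [h, h1, h2]; omega
      rw [this, Finset.card_image_of_injective _ (fun a b h => by simpa using h)]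
      simp [h, h1, h2]
    · have : choices G k p e = (Finset.range k).image (fun b => (0, b)) := by
        ext ⟨a, b⟩; rw [choices_spec]; simp [h, h1, h2]; omega
      rw [this, Finset.card_image_of_injective _ (fun a b h => by simpa using h)]
      simp [h, h1, h2]
    · have : choices G k p e = {(0, k - 1)} := by
        ext ⟨a, b⟩; rw [choices_spec]; simp [h, h1, h2]; omega
      rw [this]
      simp [h, h1, h2]

lemma extEdgeCount_eq (p : Finset V × Finset (Sym2 V)) (n : ℕ) :
    extEdgeCount G p.1 p.2 n = (Finset.univ.filter (fun e : G.edgeSet =>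
      e.1 ∉ p.2 ∧ {v | v ∈ e.1 ∧ v ∈ p.1}.ncard = n)).card := by
  have : {e : Sym2 V | e ∈ G.edgeSet ∧ e ∉ p.2 ∧ {v | v ∈ e ∧ v ∈ p.1}.ncard = n} =
      (((Finset.univ.filter (fun e : G.edgeSet =>
      e.1 ∉ p.2 ∧ {v | v ∈ e.1 ∧ v ∈ p.1}.ncard = n)).image Subtype.val : Finset (Sym2 V)) :
        Set (Sym2 V)) := by
    ext e
    simp
    tauto
  rw [extEdgeCount, this, Set.ncard_coe_finset, Finset.card_image_of_injective _
    Subtype.val_injective]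

lemma prod_choices (hk : 1 ≤ k) (p : Finset V × Finset (Sym2 V)) :
    ∏ e : G.edgeSet, (choices G k p e).card =
      k ^ extEdgeCount G p.1 p.2 1 * (k + 1).choose 2 ^ extEdgeCount G p.1 p.2 2 := by
  simp_rw [card_choices hk]
  rw [Finset.prod_mul_distrib, extEdgeCount_eq, extEdgeCount_eq]
  congr 1 <;> rw [← Finset.prod_filter, Finset.prod_const]

lemma subtree_sum_eq (hk : 1 ≤ k) :
    ∑ p ∈ Finset.univ.filter (fun p : Finset V × Finset (Sym2 V) => IsSubtree G p.1 p.2),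
      ∏ e : G.edgeSet, (choices G k p e).card =
    ∑ i ∈ Finset.range (G.edgeSet.ncard + 1),
        ∑ j ∈ Finset.range (G.edgeSet.ncard + 1),
          subtreeCountExt G i j * k ^ i * ((k + 1).choose 2) ^ j := by
  have hle : ∀ p : Finset V × Finset (Sym2 V), ∀ n, extEdgeCount G p.1 p.2 n ≤ G.edgeSet.ncard := by
    intro p n
    exact Set.ncard_le_ncard (fun e he => he.1) (Set.toFinite _)
  rw [← Finset.sum_product']
  rw [← Finset.sum_fiberwise_of_maps_to (t := Finset.range (G.edgeSet.ncard + 1) ×ˢ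
    Finset.range (G.edgeSet.ncard + 1))
    (g := fun p => (extEdgeCount G p.1 p.2 1, extEdgeCount G p.1 p.2 2))]
  · refine Finset.sum_congr rfl ?_
    rintro ⟨i, j⟩ -
    have : subtreeCountExt G i j = ((Finset.univ.filter
        (fun p : Finset V × Finset (Sym2 V) => IsSubtree G p.1 p.2)).filter
        (fun p => (extEdgeCount G p.1 p.2 1, extEdgeCount G p.1 p.2 2) = (i, j))).card := by
      rw [subtreeCountExt, ← Set.ncard_coe_finset]
      congr 1
      ext p
      simp
    rw [this, mul_assoc, ← smul_eq_mul, ← Finset.sum_const]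
    refine Finset.sum_congr rfl ?_
    intro p hp
    simp only [Finset.mem_filter, Prod.mk.injEq] at hp
    rw [prod_choices hk, hp.2.1, hp.2.2]
  · intro p _
    have h1 := hle p 1
    have h2 := hle p 2
    simp only [Finset.mem_product, Finset.mem_range]
    omega

lemma count_main (hk : 1 ≤ k) :
    subtreeCount (stretch G k) =
      (∑ i ∈ Finset.range (G.edgeSet.ncard + 1),
        ∑ j ∈ Finset.range (G.edgeSet.ncard + 1),
          subtreeCountExt G i j * k ^ i * ((k + 1).choose 2) ^ j) +
        k.choose 2 * G.edgeSet.ncard := by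
  rw [← subtree_sum_eq hk]
  have h0 : subtreeCount (stretch G k) = (Finset.univ.filter (fun p :
      Finset (V ⊕ (G.edgeSet × Fin (k - 1))) × Finset (Sym2 (V ⊕ (G.edgeSet × Fin (k - 1)))) =>
      IsSubtree (stretch G k) p.1 p.2)).card := by
    rw [subtreeCount, ← Set.ncard_coe_finset]
    congr 1
    ext p
    simp
  rw [h0, ← Finset.card_filter_add_card_filter_not (fun p => ∃ v, Sum.inl v ∈ p.1)]
  congr 1
  · simp_rw [← Fintype.card_piFinset]
    rw [← Finset.card_sigma]
    symm
    refine Finset.card_bij (fun x _ => (PhiS k x.1.1 x.2, PhiB k x.2)) ?_ ?_ ?_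
    · rintro ⟨p, c⟩ h
      simp only [Finset.mem_sigma, Finset.mem_filter, Finset.mem_univ, true_and,
        Fintype.mem_piFinset] at h ⊢
      obtain ⟨v, hv⟩ := h.1.1
      exact ⟨Phi_subtree hk h.1 h.2, v, inl_mem_PhiS.2 hv⟩
    · rintro ⟨p, c⟩ h ⟨p', c'⟩ h' heq
      simp only [Finset.mem_sigma, Finset.mem_filter, Finset.mem_univ, true_and,
        Fintype.mem_piFinset] at h h'
      rw [Prod.mk.injEq] at heq
      obtain ⟨rfl, rfl⟩ := Phi_inj hk h.1 h'.1 h.2 h'.2 heq.1 heq.2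
      rfl
    · rintro ⟨S', B'⟩ h
      simp only [Finset.mem_filter, Finset.mem_univ, true_and] at h
      obtain ⟨h, v, hv⟩ := h
      obtain ⟨p, c, h1, h2, h3, h4⟩ := exists_Phi hk h hv
      refine ⟨⟨p, c⟩, ?_, by rw [h3, h4]⟩
      simp only [Finset.mem_sigma, Finset.mem_filter, Finset.mem_univ, true_and,
        Fintype.mem_piFinset]
      exact ⟨h1, h2⟩
  · have hE : G.edgeSet.ncard = (Finset.univ : Finset G.edgeSet).card := by
      rw [Finset.card_univ, ← Nat.card_eq_fintype_card]; rfl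
    rw [hE, mul_comm, ← card_pairs' k hk, ← Finset.card_product]
    symm
    refine Finset.card_bij (fun x _ => (PsiS k x.1 x.2, PsiB k x.1 x.2)) ?_ ?_ ?_
    · rintro ⟨e, q⟩ h
      simp only [Finset.mem_product, Finset.mem_filter, Finset.mem_univ, true_and,
        Finset.mem_range] at h ⊢
      refine ⟨Psi_subtree hk e h.2.2 h.1.2, ?_⟩
      rintro ⟨v, hv⟩
      simp only [PsiS, Finset.mem_image, Finset.mem_Icc] at hv
      obtain ⟨j, hj, hv⟩ := hv
      rw [pos_mid' e j (by omega) (by omega)] at hv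
      simp at hv
    · rintro ⟨e, q⟩ h ⟨e', q'⟩ h' heq
      simp only [Finset.mem_product, Finset.mem_filter, Finset.mem_univ, true_and,
        Finset.mem_range] at h h'
      rw [Prod.mk.injEq] at heq
      obtain ⟨rfl, rfl⟩ := Psi_inj hk h.2.1 h.2.2 h.1.2 h'.2.1 h'.2.2 h'.1.2 heq.1
      rfl
    · rintro ⟨S', B'⟩ h
      simp only [Finset.mem_filter, Finset.mem_univ, true_and, not_exists] at h
      obtain ⟨e, q, h1, h2, h3, h4, h5⟩ := exists_Psi hk h.1 h.2
      refine ⟨(e, q), ?_, by rw [h4, h5]⟩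
      simp only [Finset.mem_product, Finset.mem_filter, Finset.mem_univ, true_and,
        Finset.mem_range]
      omega

end StretchAux

/-- For a graph `G` with edge set `E` and `k ≥ 1`, the number of
subtrees of the `k`-stretch `G_k` equals
`Σ_{i,j} t_{i,j}(G) k^i C(k+1,2)^j + k(k−1)|E|/2`. -/
theorem subtreeCount_stretch {V : Type*} [Fintype V] [LinearOrder V]
    (G : SimpleGraph V) (k : ℕ) (hk : 1 ≤ k) :
    subtreeCount (stretch G k) =
      (∑ i ∈ Finset.range (G.edgeSet.ncard + 1),
        ∑ j ∈ Finset.range (G.edgeSet.ncard + 1),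
          subtreeCountExt G i j * k ^ i * ((k + 1).choose 2) ^ j) +
        k.choose 2 * G.edgeSet.ncard := by
  exact count_main hk
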